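/- For every ε > 0 there exists C such that for all n ≥ C, A_α(K_n) ≥ n^{3/2}/(4(1+ε)³) − n/(4(1+ε)²), where A_α denotes the achromatic arboricity. -/

import Mathlib

/-- A partition of the edge set of `G` into `k` nonempty forests (acyclic classes)
such that the union of any two distinct parts contains a cycle. -/
def IsCompleteForestPartition {V : Type*} (G : SimpleGraph V) (k : ℕ)
    (P : Fin k → Set (Sym2 V)) : Prop :=
  (∀ i, (P i).Nonempty) ∧
  (∀ i j, i ≠ j → Disjoint (P i) (P j)) ∧
  (⋃ i, P i) = G.edgeSet ∧
  (∀ i, (SimpleGraph.fromEdgeSet (P i)).IsAcyclic) ∧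
  (∀ i j, i ≠ j → ¬ (SimpleGraph.fromEdgeSet (P i ∪ P j)).IsAcyclic)

/-- The achromatic arboricity of `G`: the largest number of parts in a partition of
`E(G)` into forests such that the union of any two parts contains a cycle. -/
noncomputable def achromaticArboricity {V : Type*} (G : SimpleGraph V) : ℕ :=
  sSup {k | ∃ P : Fin k → Set (Sym2 V), IsCompleteForestPartition G k P}


namespace AchArb

open SimpleGraph

/-- A family of edge-disjoint nonempty forests whose pairwise unions contain cycles. -/
structure FPacking {V ι : Type} (T : ι → SimpleGraph V) : Prop where
  ne : ∀ i, T i ≠ ⊥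
  disj : ∀ i j, i ≠ j → Disjoint (T i) (T j)
  acyc : ∀ i, (T i).IsAcyclic
  cyc : ∀ i j, i ≠ j → ¬ (T i ⊔ T j).IsAcyclic

/-- Uncovered ordered pairs. -/
def uncov {V ι : Type} (T : ι → SimpleGraph V) : Set (V × V) :=
  {p | p.1 ≠ p.2 ∧ ∀ i, ¬ (T i).Adj p.1 p.2}

lemma edge_acyclic {V : Type} (u v : V) : (edge u v).IsAcyclic := by
  by_cases h : u = v
  · subst h; simp
  · have := IsAcyclic.sup_edge_of_not_reachable (G := (⊥ : SimpleGraph V)) (u := u) (v := v)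
      (by simpa using h) isAcyclic_bot
    simpa using this

lemma FPacking.extend {V : Type} [Finite V] : ∀ (m : ℕ) (ι : Type) [Fintype ι]
    (T : ι → SimpleGraph V), FPacking T → (uncov T).ncard ≤ m →
    ∃ (κ : Type) (_ : Fintype κ) (T' : κ → SimpleGraph V), FPacking T' ∧
      Fintype.card ι ≤ Fintype.card κ ∧ ∀ u v, u ≠ v → ∃ i, (T' i).Adj u v := by
  classical
  intro m
  induction m with
  | zero =>
    intro ι _ T hT h0
    refine ⟨ι, inferInstance, T, hT, le_rfl, fun u v huv => ?_⟩
    have : uncov T = ∅ := by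
      rw [← Set.ncard_eq_zero (Set.toFinite _)]; omega
    by_contra hc
    push Not at hc
    have : (u, v) ∈ uncov T := ⟨huv, hc⟩
    simp_all
  | succ m ih =>
    intro ι _ T hT hm
    by_cases hU : (uncov T).Nonempty
    swap
    · exact ih ι T hT (by rw [Set.not_nonempty_iff_eq_empty.1 hU]; simp)
    obtain ⟨⟨u, v⟩, huv, hun⟩ := hU
    simp only at huv hun
    have hlt : ∀ {κ : Type} (T' : κ → SimpleGraph V),
        (∀ i, ∃ j, T i ≤ T' j) → (∃ j, (T' j).Adj u v) → (uncov T').ncard ≤ m := by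
      intro κ T' h1 ⟨j, hj⟩
      have : (uncov T').ncard < (uncov T).ncard := by
        apply Set.ncard_lt_ncard _ (Set.toFinite _)
        refine ⟨?_, ?_⟩
        · rintro ⟨a, b⟩ ⟨hab, h⟩
          refine ⟨hab, fun i hi => ?_⟩
          obtain ⟨k, hk⟩ := h1 i
          exact h k (hk hi)
        · intro hsub
          have := hsub (show (u, v) ∈ uncov T from ⟨huv, hun⟩)
          exact this.2 j hj
      omega
    have hadj : (edge u v).Adj u v := by simp [edge_adj, huv]
    by_cases hex : ∃ i, (T i ⊔ edge u v).IsAcyclic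
    · obtain ⟨i₀, hi₀⟩ := hex
      set T' : ι → SimpleGraph V := fun i => if i = i₀ then T i ⊔ edge u v else T i with hT'
      have hle : ∀ i, T i ≤ T' i := by
        intro i; simp only [hT']; split_ifs
        · exact le_sup_left
        · exact le_rfl
      have hd : ∀ i, Disjoint (T i) (edge u v) := fun i => (disjoint_edge _).2 (hun i)
      refine ih ι T' ⟨?_, ?_, ?_, ?_⟩ (hlt T' (fun i => ⟨i, hle i⟩) ⟨i₀, ?_⟩)
      · intro i h
        exact hT.ne i (le_bot_iff.1 (h ▸ hle i))
      · intro i j hij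
        simp only [hT']
        split_ifs with h1 h2 h2
        · exact absurd (h1.trans h2.symm) hij
        · exact (hT.disj i j hij).sup_left (hd j).symm
        · exact (hT.disj i j hij).sup_right (hd i)
        · exact hT.disj i j hij
      · intro i
        simp only [hT']
        split_ifs with h1
        · exact h1 ▸ hi₀
        · exact hT.acyc i
      · intro i j hij h
        exact hT.cyc i j hij (h.anti (sup_le_sup (hle i) (hle j)))
      · simp only [hT', if_true]
        exact Or.inr hadj
    · push Not at hex
      set T' : Option ι → SimpleGraph V := fun o => o.elim (edge u v) T with hT'
      have hP : FPacking T' := by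
        refine ⟨?_, ?_, ?_, ?_⟩
        · rintro (_ | i)
          · intro h
            have h' : edge u v = ⊥ := h
            rw [h'] at hadj
            exact hadj
          · exact hT.ne i
        · rintro (_ | i) (_ | j) hij
          · exact absurd rfl hij
          · exact ((disjoint_edge _).2 (hun j)).symm
          · exact (disjoint_edge _).2 (hun i)
          · exact hT.disj i j (fun h => hij (h ▸ rfl))
        · rintro (_ | i)
          · exact edge_acyclic u v
          · exact hT.acyc i
        · rintro (_ | i) (_ | j) hij
          · exact absurd rfl hij
          · have := hex j
            rwa [sup_comm] at this
          · exact hex i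
          · exact hT.cyc i j (fun h => hij (h ▸ rfl))
      obtain ⟨κ, hκ, T'', h1, h2, h3⟩ := ih (Option ι) T' hP
        (hlt T' (fun i => ⟨some i, le_rfl⟩) ⟨none, hadj⟩)
      exact ⟨κ, hκ, T'', h1, by simp at h2; omega, h3⟩

lemma le_achromatic {V : Type} [Finite V] {ι : Type} [Fintype ι]
    (T : ι → SimpleGraph V) (hT : FPacking T) :
    Fintype.card ι ≤ achromaticArboricity (⊤ : SimpleGraph V) := by
  classical
  obtain ⟨κ, _, T', h1, h2, h3⟩ := FPacking.extend _ ι T hT le_rfl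
  refine h2.trans ?_
  unfold achromaticArboricity
  apply le_csSup
  · refine ⟨Nat.card (Sym2 V), ?_⟩
    rintro k ⟨P, hne, hd, -⟩
    choose f hf using hne
    have hinj : Function.Injective f := by
      intro i j hij
      by_contra hc
      exact Set.disjoint_left.1 (hd i j hc) (hf i) (hij ▸ hf j)
    have := Nat.card_le_card_of_injective f hinj
    simpa using this
  · let e := (Fintype.equivFin κ).symm
    refine ⟨fun i => (T' (e i)).edgeSet, ?_, ?_, ?_, ?_, ?_⟩
    · intro i
      rw [Set.nonempty_iff_ne_empty]
      simpa using h1.ne (e i)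
    · intro i j hij
      simpa using h1.disj _ _ (fun h => hij (e.injective h))
    · ext x
      induction x with | _ u v
      simp only [Set.mem_iUnion, mem_edgeSet, top_adj]
      constructor
      · rintro ⟨i, hi⟩; exact hi.ne
      · intro h
        obtain ⟨i, hi⟩ := h3 u v h
        exact ⟨e.symm i, by simpa using hi⟩
    · intro i
      simpa using h1.acyc (e i)
    · intro i j hij
      simpa [fromEdgeSet_union] using h1.cyc _ _ (fun h => hij (e.injective h))

/-- Acyclicity criterion. -/
lemma acyclic_of_rank {V : Type} (G : SimpleGraph V) (r : V → ℕ)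
    (h1 : ∀ u v, G.Adj u v → r u ≠ r v)
    (h2 : ∀ v a b, G.Adj v a → G.Adj v b → r a < r v → r b < r v → a = b) :
    G.IsAcyclic := by
  classical
  intro v c hc
  obtain ⟨w, hw, hmax⟩ := c.support.toFinset.exists_max_image r ⟨v, by simp⟩
  simp only [List.mem_toFinset] at hw hmax
  have hc' : (c.rotate w hw).IsCycle := by simpa using hc
  have hnn : ¬ (c.rotate w hw).Nil := hc'.not_nil
  have ha := (c.rotate w hw).adj_snd hnn
  have hb := ((c.rotate w hw).adj_penultimate hnn).symm
  refine hc'.snd_ne_penultimate (h2 w _ _ ha hb ?_ ?_)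
  · refine lt_of_le_of_ne (hmax _ ?_) (h1 _ _ ha.symm)
    exact (Walk.mem_support_rotate_iff c w hw).1 (Walk.getVert_mem_support _ _)
  · refine lt_of_le_of_ne (hmax _ ?_) (h1 _ _ hb.symm)
    exact (Walk.mem_support_rotate_iff c w hw).1 (Walk.getVert_mem_support _ _)

lemma not_acyclic_of_two {V : Type} (G H : SimpleGraph V) (hd : Disjoint G H) {u v : V}
    (huv : u ≠ v) (hG : G.Reachable u v) (hH : H.Reachable u v) : ¬ (G ⊔ H).IsAcyclic := by
  classical
  intro hac
  obtain ⟨p, hp⟩ := hG.exists_isPath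
  obtain ⟨q, hq⟩ := hH.exists_isPath
  have e := (hac.subsingleton_path u v).elim ⟨p.mapLe le_sup_left, hp.mapLe _⟩
    ⟨q.mapLe le_sup_right, hq.mapLe _⟩
  have e' : (p.mapLe (le_sup_left : G ≤ G ⊔ H)).edges = (q.mapLe (le_sup_right : H ≤ G ⊔ H)).edges :=
    congrArg (fun x => x.1.edges) e
  simp only [Walk.edges_mapLe_eq_edges] at e'
  cases p with
  | nil => exact huv rfl
  | @cons _ w _ h p' =>
    have m1 : s(u, w) ∈ q.edges := by rw [← e']; exact List.mem_cons_self
    have m2 := q.edges_subset_edgeSet m1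
    exact (disjoint_edgeSet.2 hd).le_bot ⟨h, m2⟩

end AchArb

namespace AchArb

open SimpleGraph

/-- cluster sizes -/
def tsz (k : Bool) : ℕ := if k then 8 else 2

/-- number of trees rooted at a cluster, per codeword -/
def nst (A k : Bool) : ℕ := if A then (if k then 5 else 1) else (if k then 6 else 0)

def swp (l : ℕ) : ℕ := if l < 6 then l + 6 else if l < 12 then l - 6 else 12

def tab88 : Fin 8 → Fin 8 → ℕ :=
  ![![12, 8, 4, 2, 0, 5, 6, 9],
    ![12, 5, 2, 3, 1, 0, 7, 4],
    ![10, 6, 7, 1, 5, 3, 9, 11],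
    ![3, 1, 0, 8, 2, 11, 10, 5],
    ![7, 3, 5, 12, 10, 6, 8, 0],
    ![6, 2, 11, 10, 9, 7, 4, 8],
    ![2, 10, 3, 4, 11, 9, 6, 1],
    ![9, 11, 1, 0, 8, 4, 12, 7]]

def tab28 (A : Bool) (x y : Fin 8) : ℕ :=
  if A then
    (if x = 0 then ![6, 7, 8, 9, 10, 0, 0, 0] y
     else if x = 1 then ![0, 0, 6, 7, 8, 9, 10, 12] y else 12)
  else
    (if x = 0 ∨ x = 1 then ![6, 7, 8, 9, 10, 11, 12, 12] y else 12)

def tab22 (x y : Fin 8) : ℕ :=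
  if x = 0 ∧ y = 0 ∨ x = 1 ∧ y = 1 then 0 else if x = 0 ∧ y = 1 ∨ x = 1 ∧ y = 0 then 6 else 12

def lab (A ki kj : Bool) (x y : Fin 8) : ℕ :=
  match ki, kj with
  | false, false => tab22 x y
  | false, true => tab28 A x y
  | true, false => swp (tab28 A y x)
  | true, true => tab88 x y

/-- label of the cell `(x, y)` seen from the first cluster; `o` tells whether it comes first -/
def lbl (A ki kj o : Bool) (x y : Fin 8) : ℕ :=
  if o then lab A ki kj x y else swp (lab A kj ki y x)

lemma lab_lt : ∀ A ki kj x y, lab A ki kj x y < 13 := by decide +kernel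

lemma lbl_card : ∀ A ki kj o, ∀ s : Fin 6, s.val < nst A ki →
    tsz kj / 2 + 1 ≤ (Finset.univ.filter (fun y : Fin 8 => y.val < tsz kj ∧
      ∃ x : Fin 8, x.val < tsz ki ∧ lbl A ki kj o x y = s.val)).card := by decide +kernel

lemma lbl_uniq : ∀ A ki kj o, ∀ s : Fin 6, s.val < nst A ki → ∀ y x x' : Fin 8,
    lbl A ki kj o x y = s.val → lbl A ki kj o x' y = s.val → x = x' := by decide +kernel

lemma lbl_opp (A ki kj o : Bool) (x y : Fin 8) (s s' : ℕ) (hs : s < 6) (hs' : s' < 6)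
    (h : lbl A ki kj o x y = s) (h' : lbl A kj ki (!o) y x = s') : False := by
  have h1 := lab_lt A ki kj x y
  have h2 := lab_lt A kj ki y x
  cases o <;> simp [lbl, swp] at h h' <;> split_ifs at * <;> omega

lemma nst_le (A k : Bool) : nst A k ≤ 6 := by revert A k; decide
lemma nst_le_tsz (A k : Bool) : nst A k ≤ tsz k := by revert A k; decide
lemma tsz_le (k : Bool) : tsz k ≤ 8 := by revert k; decide

/-- sizes including the hub -/
def osz {q : ℕ} (k : Fin q → Bool) (o : Option (Fin q)) : ℕ := o.elim 8 (fun j => tsz (k j))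

/-- local vertices -/
abbrev LV {q : ℕ} (k : Fin q → Bool) := {p : Option (Fin q) × Fin 8 // p.2.val < osz k p.1}

/-- tree labels -/
abbrev TI {q : ℕ} (A : Bool) (k : Fin q → Bool) := Σ i : Fin q, Fin (nst A (k i))

/-- `ChP` : the second vertex is the parent of the first. -/
def ChP {q : ℕ} (A : Bool) (k : Fin q → Bool) (i : Fin q) (s : ℕ) :
    Option (Fin q) → Fin 8 → Option (Fin q) → Fin 8 → Prop
  | some j, _, none, h => j = i ∧ h.val = s
  | none, h, some j, y => j = i ∧ 6 ≤ h.val ∧ y.val = s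
  | some j, y, some i', x => i' = i ∧ j ≠ i ∧ lbl A (k i) (k j) (decide (i < j)) x y = s
  | none, _, none, _ => False

def Ch {q : ℕ} (A : Bool) (k : Fin q → Bool) (τ : TI A k) (u v : LV k) : Prop :=
  ChP A k τ.1 τ.2.val u.1.1 u.1.2 v.1.1 v.1.2

def rkP {q : ℕ} (i : Fin q) (s : ℕ) : Option (Fin q) → Fin 8 → ℕ
  | none, h => if h.val = s then 0 else 2
  | some j, _ => if j = i then 1 else 2

def rk {q : ℕ} (A : Bool) (k : Fin q → Bool) (τ : TI A k) (u : LV k) : ℕ :=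
  rkP τ.1 τ.2.val u.1.1 u.1.2

variable {q : ℕ} {A : Bool} {k : Fin q → Bool}

lemma s_lt (τ : TI A k) : τ.2.val < 6 := lt_of_lt_of_le τ.2.2 (nst_le _ _)

lemma ch_rk (τ : TI A k) (u v : LV k) (h : Ch A k τ u v) : rk A k τ v < rk A k τ u := by
  have hs := s_lt τ
  obtain ⟨⟨o, y⟩, hu⟩ := u
  obtain ⟨⟨o', y'⟩, hv⟩ := v
  rcases o with _ | j <;> rcases o' with _ | j' <;> simp only [Ch, ChP, rk, rkP] at h ⊢
  · obtain ⟨h1, h2, h3⟩ := h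
    rw [if_pos h1, if_neg (by omega)]; omega
  · rw [if_pos h.1, if_pos h.2]; omega
  · rw [if_pos h.1, if_neg h.2.1]; omega

lemma ch_ne (τ : TI A k) (u v : LV k) (h : Ch A k τ u v) : u.1.1 ≠ v.1.1 := by
  obtain ⟨⟨o, y⟩, hu⟩ := u
  obtain ⟨⟨o', y'⟩, hv⟩ := v
  rcases o with _ | j <;> rcases o' with _ | j' <;> simp only [Ch, ChP] at h ⊢
  · simp
  · simp
  · intro hh
    simp only [Option.some.injEq] at hh
    exact h.2.1 (hh.trans h.1)

lemma ch_uniq (τ : TI A k) (u v v' : LV k) (h : Ch A k τ u v) (h' : Ch A k τ u v') : v = v' := by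
  have hs := s_lt τ
  obtain ⟨⟨o, y⟩, hu⟩ := u
  obtain ⟨⟨o', y'⟩, hv⟩ := v
  obtain ⟨⟨o'', y''⟩, hv'⟩ := v'
  apply Subtype.ext
  rcases o with _ | j <;> rcases o' with _ | j' <;> rcases o'' with _ | j'' <;>
    simp only [Ch, ChP] at h h' ⊢
  · obtain ⟨h1, h2, h3⟩ := h
    obtain ⟨h1', h2', h3'⟩ := h'
    rw [h1, h1', Fin.ext (h3.trans h3'.symm)]
  · rw [Fin.ext (h.2.trans h'.2.symm)]
  · exact absurd h.1 h'.2.1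
  · exact absurd h'.1 h.2.1
  · obtain ⟨h1, h2, h3⟩ := h
    obtain ⟨h1', h2', h3'⟩ := h'
    rw [h1, h1', lbl_uniq _ _ _ _ ⟨τ.2.val, hs⟩ τ.2.2 _ _ _ h3 h3']

lemma ti_ext (τ τ' : TI A k) (h : τ.1 = τ'.1) (h' : τ.2.val = τ'.2.val) : τ = τ' := by
  obtain ⟨i, s⟩ := τ
  obtain ⟨i', s'⟩ := τ'
  simp only at h
  subst h
  simp only at h'
  rw [Fin.ext h']

lemma ch_same (τ τ' : TI A k) (u v : LV k) (h : Ch A k τ u v) (h' : Ch A k τ' u v) : τ = τ' := by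
  obtain ⟨⟨o, y⟩, hu⟩ := u
  obtain ⟨⟨o', y'⟩, hv⟩ := v
  rcases o with _ | j <;> rcases o' with _ | j' <;> simp only [Ch, ChP] at h h'
  · exact ti_ext _ _ (h.1.symm.trans h'.1) (h.2.2.symm.trans h'.2.2)
  · exact ti_ext _ _ (h.1.symm.trans h'.1) (h.2.symm.trans h'.2)
  · have e : τ.1 = τ'.1 := h.1.symm.trans h'.1
    refine ti_ext _ _ e ?_
    rw [← h.2.2, ← h'.2.2, e]

lemma ch_opp (τ τ' : TI A k) (u v : LV k) (h : Ch A k τ u v) (h' : Ch A k τ' v u) : False := by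
  have hs := s_lt τ
  have hs' := s_lt τ'
  obtain ⟨⟨o, y⟩, hu⟩ := u
  obtain ⟨⟨o', y'⟩, hv⟩ := v
  rcases o with _ | j <;> rcases o' with _ | j' <;> simp only [Ch, ChP] at h h'
  · omega
  · omega
  · obtain ⟨h1, h2, h3⟩ := h
    obtain ⟨h1', h2', h3'⟩ := h'
    subst h1'
    subst h1
    refine lbl_opp _ _ _ _ _ _ _ _ hs hs' h3 ?_
    rw [← h3']
    congr 1
    by_cases hlt : τ.1 < τ'.1
    · simp [hlt, hlt.le]
    · have : τ'.1 < τ.1 := lt_of_le_of_ne (not_lt.1 hlt) h2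
      simp [hlt, this]

/-- The local tree. -/
def LT (A : Bool) (k : Fin q → Bool) (τ : TI A k) : SimpleGraph (LV k) where
  Adj u v := Ch A k τ u v ∨ Ch A k τ v u
  symm := ⟨fun _ _ h => h.symm⟩
  loopless := ⟨fun u h => by
    rcases h with h | h <;> exact ch_ne τ u u h rfl⟩

lemma lt_ne (τ : TI A k) (u v : LV k) (h : (LT A k τ).Adj u v) : u.1.1 ≠ v.1.1 := by
  rcases h with h | h
  · exact ch_ne _ _ _ h
  · exact (ch_ne _ _ _ h).symm

lemma lt_same (τ τ' : TI A k) (u v : LV k) (h : (LT A k τ).Adj u v)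
    (h' : (LT A k τ').Adj u v) : τ = τ' := by
  rcases h with h | h <;> rcases h' with h' | h'
  · exact ch_same _ _ _ _ h h'
  · exact (ch_opp _ _ _ _ h h').elim
  · exact (ch_opp _ _ _ _ h h').elim
  · exact ch_same _ _ _ _ h h'

lemma lt_map_acyclic (τ : TI A k) {V : Type} (f : LV k ↪ V) : ((LT A k τ).map f).IsAcyclic := by
  have hr : ∀ u, Function.extend f (rk A k τ) 0 (f u) = rk A k τ u :=
    fun u => f.injective.extend_apply _ _ _
  apply acyclic_of_rank _ (Function.extend f (rk A k τ) 0)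
  · intro a b hab
    rw [map_adj] at hab
    obtain ⟨u, v, huv, rfl, rfl⟩ := hab
    rw [hr, hr]
    rcases huv with h | h
    · exact (ch_rk _ _ _ h).ne'
    · exact (ch_rk _ _ _ h).ne
  · intro v a b ha hb hra hrb
    rw [map_adj] at ha hb
    obtain ⟨u, v1, h1, rfl, rfl⟩ := ha
    obtain ⟨u', v2, h2, e, rfl⟩ := hb
    have := f.injective e
    subst this
    rw [hr, hr] at hra hrb
    rcases h1 with h1 | h1
    swap
    · have := ch_rk _ _ _ h1; omega
    rcases h2 with h2 | h2
    swap
    · have := ch_rk _ _ _ h2; omega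
    rw [ch_uniq _ _ _ _ h1 h2]

/-- Vertices covered by a local tree. -/
def cov (τ : TI A k) (o : Option (Fin q)) : Finset (Fin 8) :=
  match o with
  | none => Finset.univ.filter (fun y => y.val = τ.2.val ∨ 6 ≤ y.val)
  | some j => if j = τ.1 then Finset.univ.filter (fun y => y.val < tsz (k j)) else
      Finset.univ.filter (fun y : Fin 8 => y.val < tsz (k j) ∧
      ∃ x : Fin 8, x.val < tsz (k τ.1) ∧
        lbl A (k τ.1) (k j) (decide (τ.1 < j)) x y = τ.2.val)

lemma cov_lt (τ : TI A k) (o : Option (Fin q)) (y : Fin 8) (h : y ∈ cov τ o) :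
    y.val < osz k o := by
  rcases o with _ | j
  · exact y.2
  · simp only [cov] at h
    split_ifs at h <;> simp at h
    · exact h
    · exact h.1

/-- The center of the tree. -/
def ctr (τ : TI A k) : LV k :=
  ⟨(none, ⟨τ.2.val, (s_lt τ).trans (by norm_num)⟩), (s_lt τ).trans (by simp [osz])⟩

lemma root_reach (τ : TI A k) (y : Fin 8) (hy : y.val < osz k (some τ.1)) :
    (LT A k τ).Reachable ⟨(some τ.1, y), hy⟩ (ctr τ) :=
  Adj.reachable (Or.inl ⟨rfl, rfl⟩)

lemma cov_reach (τ : TI A k) (o : Option (Fin q)) (y : Fin 8) (h : y ∈ cov τ o) :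
    (LT A k τ).Reachable ⟨(o, y), cov_lt τ o y h⟩ (ctr τ) := by
  have hs := s_lt τ
  rcases o with _ | j
  · have h' := h
    simp only [cov, Finset.mem_filter, Finset.mem_univ, true_and] at h'
    rcases h' with h' | h'
    · have : (⟨(none, y), cov_lt τ none y h⟩ : LV k) = ctr τ := by
        apply Subtype.ext
        exact Prod.ext rfl (Fin.ext h')
      rw [this]
    · have hlt : τ.2.val < osz k (some τ.1) := lt_of_lt_of_le τ.2.2 (nst_le_tsz _ _)
      refine Reachable.trans (Adj.reachable (Or.inl ?_)) (root_reach τ ⟨τ.2.val, by omega⟩ hlt)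
      exact ⟨rfl, h', rfl⟩
  · by_cases hj : j = τ.1
    · subst hj
      exact root_reach τ y _
    · have h' := h
      simp only [cov, if_neg hj, Finset.mem_filter, Finset.mem_univ, true_and] at h'
      obtain ⟨-, x, hx, hl⟩ := h'
      refine Reachable.trans (Adj.reachable (Or.inl ?_)) (root_reach τ x hx)
      exact ⟨rfl, hj, hl⟩

lemma cov_card (τ : TI A k) (j : Fin q) : tsz (k j) / 2 + 1 ≤ (cov τ (some j)).card := by
  simp only [cov]
  split_ifs with h
  · have : ∀ b : Bool, tsz b / 2 + 1 ≤
      (Finset.univ.filter (fun y : Fin 8 => y.val < tsz b)).card := by decide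
    exact this _
  · exact lbl_card _ _ _ _ ⟨τ.2.val, s_lt τ⟩ τ.2.2

lemma cov_inter (τ τ' : TI A k) (o : Option (Fin q)) :
    ∃ y y', y ≠ y' ∧ y ∈ cov τ o ∧ y' ∈ cov τ o ∧ y ∈ cov τ' o ∧ y' ∈ cov τ' o := by
  rcases o with _ | j
  · exact ⟨6, 7, by decide, by simp [cov], by simp [cov], by simp [cov], by simp [cov]⟩
  · have h1 := cov_card τ j
    have h2 := cov_card τ' j
    have h3 : (cov τ (some j) ∪ cov τ' (some j)).card ≤ tsz (k j) := by
      have : ∀ b : Bool, (Finset.univ.filter (fun y : Fin 8 => y.val < tsz b)).card ≤ tsz b := by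
        decide
      refine (Finset.card_le_card ?_).trans (this (k j))
      intro y hy
      simp only [Finset.mem_filter, Finset.mem_univ, true_and]
      rcases Finset.mem_union.1 hy with hy | hy
      · exact cov_lt _ _ _ hy
      · exact cov_lt _ _ _ hy
    have h4 := Finset.card_union_add_card_inter (cov τ (some j)) (cov τ' (some j))
    have h5 : 1 < (cov τ (some j) ∩ cov τ' (some j)).card := by
      have : tsz (k j) % 2 = 0 := by cases k j <;> rfl
      omega
    obtain ⟨a, ha, b, hb, hab⟩ := Finset.one_lt_card.1 h5
    rw [Finset.mem_inter] at ha hb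
    exact ⟨a, b, hab, ha.1, hb.1, ha.2, hb.2⟩

/-- Global vertices. -/
abbrev GV (F : Type) {q : ℕ} (k : Fin q → Bool) :=
  {p : Option (Fin q) × F × Fin 8 // p.2.2.val < osz k p.1}

section field
variable {F : Type} [Field F]

/-- codewords -/
def cw (e : Fin q ≃ F) (c : F × F) (o : Option (Fin q)) : F := o.elim c.1 (fun i => c.1 * e i + c.2)

lemma cw_uniq (e : Fin q ≃ F) (c d : F × F) (o o' : Option (Fin q)) (ho : o ≠ o')
    (h : cw e c o = cw e d o) (h' : cw e c o' = cw e d o') : c = d := by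
  rcases o with _ | i <;> rcases o' with _ | j <;> simp only [cw, Option.elim] at h h'
  · exact absurd rfl ho
  · exact Prod.ext h (by rw [h] at h'; exact add_left_cancel h')
  · exact Prod.ext h' (by rw [h'] at h; exact add_left_cancel h)
  · have hne : e i - e j ≠ 0 := by
      intro hh
      exact ho (congrArg some (e.injective (sub_eq_zero.1 hh)))
    have h1 : c.1 = d.1 := by
      apply mul_right_cancel₀ hne
      linear_combination h - h'
    exact Prod.ext h1 (by rw [h1] at h; exact add_left_cancel h)

lemma cw_agree (e : Fin q ≃ F) (c d : F × F) : ∃ o, cw e c o = cw e d o := by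
  by_cases h : c.1 = d.1
  · exact ⟨none, h⟩
  · refine ⟨some (e.symm ((d.2 - c.2) / (c.1 - d.1))), ?_⟩
    have : c.1 - d.1 ≠ 0 := sub_ne_zero.2 h
    simp only [cw, Option.elim, Equiv.apply_symm_apply]
    field_simp
    ring

/-- Embedding of local vertices. -/
def emb (e : Fin q ≃ F) (k : Fin q → Bool) (c : F × F) : LV k ↪ GV F k where
  toFun u := ⟨(u.1.1, cw e c u.1.1, u.1.2), u.2⟩
  inj' := by
    rintro ⟨⟨o, y⟩, hu⟩ ⟨⟨o', y'⟩, hv⟩ h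
    simp only [Subtype.mk.injEq, Prod.mk.injEq] at h
    apply Subtype.ext
    simp only [h.1, h.2.2]

/-- The global forests. -/
def GT (A : Bool) (e : Fin q ≃ F) (k : Fin q → Bool) {V : Type} (g : GV F k ↪ V)
    (x : (F × F) × TI A k) : SimpleGraph V :=
  (LT A k x.2).map ((emb e k x.1).trans g)

lemma gt_packing (A : Bool) (e : Fin q ≃ F) (k : Fin q → Bool) {V : Type} (g : GV F k ↪ V) :
    FPacking (GT A e k g) := by
  have hdisj : ∀ x y : (F × F) × TI A k, x ≠ y → Disjoint (GT A e k g x) (GT A e k g y) := by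
    rintro ⟨c, τ⟩ ⟨d, τ'⟩ hne
    rw [disjoint_left]
    intro P Q h1 h2
    simp only [GT] at h1 h2
    rw [map_adj] at h1 h2
    obtain ⟨u, v, huv, rfl, rfl⟩ := h1
    obtain ⟨u', v', huv', eu, ev⟩ := h2
    have eu : (u'.1.1, cw e d u'.1.1, u'.1.2) = (u.1.1, cw e c u.1.1, u.1.2) :=
      congrArg Subtype.val (g.injective eu)
    have ev : (v'.1.1, cw e d v'.1.1, v'.1.2) = (v.1.1, cw e c v.1.1, v.1.2) :=
      congrArg Subtype.val (g.injective ev)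
    simp only [Prod.mk.injEq] at eu ev
    have hu : u' = u := Subtype.ext (Prod.ext eu.1 eu.2.2)
    have hv : v' = v := Subtype.ext (Prod.ext ev.1 ev.2.2)
    subst hu
    subst hv
    have hc : d = c := cw_uniq e _ _ _ _ (lt_ne _ _ _ huv) eu.2.1 ev.2.1
    exact hne (Prod.ext hc.symm (lt_same _ _ _ _ huv huv'))
  refine ⟨?_, hdisj, ?_, ?_⟩
  · rintro ⟨c, τ⟩ h
    have hlt : τ.2.val < osz k (some τ.1) := lt_of_lt_of_le τ.2.2 (nst_le_tsz _ _)
    have h8 : τ.2.val < 8 := (s_lt τ).trans (by norm_num)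
    have hadj : (LT A k τ).Adj ⟨(some τ.1, ⟨τ.2.val, h8⟩), hlt⟩ (ctr τ) := Or.inl ⟨rfl, rfl⟩
    have := (map_adj_apply (f := (emb e k c).trans g)).2 hadj
    change (GT A e k g (c, τ)).Adj _ _ at this
    rw [h] at this
    exact this
  · rintro ⟨c, τ⟩
    exact lt_map_acyclic τ _
  · rintro ⟨c, τ⟩ ⟨d, τ'⟩ hne
    obtain ⟨o, ho⟩ := cw_agree e c d
    obtain ⟨y, y', hy, h1, h2, h3, h4⟩ := cov_inter τ τ' o
    have key : ∀ (c : F × F) (τ : TI A k) (y y' : Fin 8) (h1 : y ∈ cov τ o) (h2 : y' ∈ cov τ o),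
        (GT A e k g (c, τ)).Reachable (g ⟨(o, cw e c o, y), cov_lt τ o y h1⟩)
          (g ⟨(o, cw e c o, y'), cov_lt τ o y' h2⟩) := by
      intro c τ y y' h1 h2
      exact ((cov_reach τ o y h1).trans (cov_reach τ o y' h2).symm).map
        (Embedding.map ((emb e k c).trans g) (LT A k τ)).toHom
    have r1 := key c τ y y' h1 h2
    have r2 := key d τ' y y' h3 h4
    simp only [← ho] at r2
    refine not_acyclic_of_two _ _ (hdisj _ _ hne) ?_ r1 r2
    intro hh
    have := g.injective hh
    simp only [Subtype.mk.injEq, Prod.mk.injEq, true_and] at this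
    exact hy this

end field

end AchArb

namespace AchArb

lemma sum_ite_lt (q b x y : ℕ) (hb : b ≤ q) :
    ∑ i : Fin q, (if i.val < b then x else y) = b * x + (q - b) * y := by
  rw [Fin.sum_univ_eq_sum_range (fun i => if i < b then x else y) q]
  obtain ⟨d, rfl⟩ := Nat.exists_eq_add_of_le hb
  rw [Finset.sum_range_add]
  have h1 : ∑ i ∈ Finset.range b, (if i < b then x else y) = b * x := by
    rw [Finset.sum_congr rfl (g := fun _ => x)]
    · simp
    · intro i hi
      rw [if_pos (Finset.mem_range.1 hi)]
  rw [h1]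
  simp

lemma achromatic_ge (n p b : ℕ) (hp : p.Prime) (hb : b ≤ p) (A : Bool)
    (hn : p * (2 * p + 6 * b + 8) ≤ n) :
    p * p * (b * nst A true + (p - b) * nst A false) ≤
      achromaticArboricity (⊤ : SimpleGraph (Fin n)) := by
  classical
  have : Fact p.Prime := ⟨hp⟩
  let k : Fin p → Bool := fun i => decide (i.val < b)
  let e : Fin p ≃ ZMod p := Fintype.equivOfCardEq (by simp [ZMod.card])
  have hcard : Fintype.card (GV (ZMod p) k) ≤ Fintype.card (Fin n) := by
    let f : GV (ZMod p) k → Σ o : Option (Fin p), ZMod p × Fin (osz k o) :=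
      fun x => ⟨x.1.1, x.1.2.1, ⟨x.1.2.2.val, x.2⟩⟩
    have hf : Function.Injective f := by
      rintro ⟨⟨o, a, y⟩, h⟩ ⟨⟨o', a', y'⟩, h'⟩ hh
      simp only [f, Sigma.mk.injEq] at hh
      obtain ⟨h1, h2⟩ := hh
      subst h1
      simp only [heq_eq_eq, Prod.mk.injEq, Fin.mk.injEq] at h2
      obtain ⟨h2, h3⟩ := h2
      subst h2
      have := Fin.ext h3
      subst this
      rfl
    refine (Fintype.card_le_of_injective f hf).trans ?_
    rw [Fintype.card_sigma]
    simp only [Fintype.card_prod, ZMod.card, Fintype.card_fin, Fintype.sum_option]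
    simp only [osz, Option.elim]
    rw [← Finset.mul_sum]
    have : ∑ i : Fin p, tsz (k i) = b * 8 + (p - b) * 2 := by
      rw [← sum_ite_lt p b 8 2 hb]
      apply Finset.sum_congr rfl
      intro i _
      simp [tsz, k]
    rw [this, ← mul_add]
    refine le_trans (Nat.mul_le_mul_left _ ?_) hn
    omega
  obtain ⟨g⟩ := Function.Embedding.nonempty_of_card_le hcard
  have h := le_achromatic (GT A e k g) (gt_packing A e k g)
  refine le_trans (le_of_eq ?_) h
  simp only [Fintype.card_prod, ZMod.card, Fintype.card_sigma, Fintype.card_fin]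
  congr 1
  rw [← sum_ite_lt p b _ _ hb]
  apply Finset.sum_congr rfl
  intro i _
  by_cases hi : i.val < b <;> simp [k, hi]

lemma ineqA (p b : ℝ) (hp : 400 ≤ p) (hb : 0 ≤ b) (h : 2 * b ≤ p) :
    (2 * p + 6 * b + 16) ^ 3 ≤ 16 * p * (p + 4 * b) ^ 2 := by
  have h1 : (2 * p + 6 * b + 16) ^ 3 ≤ (51 / 25 * p + 6 * b) ^ 3 := by
    gcongr ?_ ^ 3
    linarith
  refine h1.trans ?_
  obtain ⟨d, rfl⟩ : ∃ d, p = 2 * b + d := ⟨p - 2 * b, by ring⟩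
  have hd : 0 ≤ d := by linarith
  rw [← sub_nonneg]
  ring_nf
  positivity

lemma ineqB (p b : ℝ) (hp : 400 ≤ p) (h : p ≤ 2 * b) (h' : b ≤ p) :
    (2 * p + 6 * b + 16) ^ 3 ≤ 16 * p * (6 * b) ^ 2 := by
  have h1 : (2 * p + 6 * b + 16) ^ 3 ≤ (51 / 25 * p + 6 * b) ^ 3 := by
    have : 0 ≤ b := by linarith
    gcongr ?_ ^ 3
    linarith
  refine h1.trans ?_
  obtain ⟨d, hd⟩ : ∃ d, d = b - p / 2 := ⟨_, rfl⟩
  obtain ⟨c, hc⟩ : ∃ c, c = p - b := ⟨_, rfl⟩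
  have hd0 : 0 ≤ d := by linarith
  have hc0 : 0 ≤ c := by linarith
  have e1 : p = 2 * (d + c) := by linarith
  have e2 : b = 2 * d + c := by linarith
  rw [e1, e2, ← sub_nonneg]
  ring_nf
  positivity

lemma exists_params (n : ℕ) (hn : 2000000 ≤ n) : ∃ p b : ℕ, p.Prime ∧ b ≤ p ∧ 400 ≤ p ∧
    p * (2 * p + 6 * b + 8) ≤ n ∧ n ≤ p * (2 * p + 6 * b + 16) := by
  set Q := Nat.findGreatest (fun Q => 2 * Q ^ 2 + 8 * Q ≤ n) n with hQ
  have hQ1 : 2 * Q ^ 2 + 8 * Q ≤ n :=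
    Nat.findGreatest_spec (P := fun Q => 2 * Q ^ 2 + 8 * Q ≤ n) (Nat.zero_le n) (by simp)
  have hQ2 : n < 2 * (Q + 1) ^ 2 + 8 * (Q + 1) := by
    by_contra hc
    push Not at hc
    have : Q + 1 ≤ Q := Nat.le_findGreatest (P := fun Q => 2 * Q ^ 2 + 8 * Q ≤ n)
      (by nlinarith) hc
    omega
  have hQbig : 800 ≤ Q := by
    by_contra hc
    push Not at hc
    have : Q + 1 ≤ 800 := by omega
    nlinarith
  obtain ⟨p, hp, hp1, hp2⟩ := Nat.exists_prime_lt_and_le_two_mul (Q / 2) (by omega)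
  have hpQ : p ≤ Q := by omega
  have hQp : Q + 1 ≤ 2 * p := by omega
  have hlow : 2 * p ^ 2 + 8 * p ≤ n := by nlinarith
  have hup : n < 8 * p ^ 2 + 16 * p := by nlinarith
  have hp0 : 0 < 6 * p := by omega
  obtain ⟨m, hm⟩ := Nat.exists_eq_add_of_le hlow
  by_cases hc : p ≤ m / (6 * p)
  · refine ⟨p, p, hp, le_rfl, by omega, ?_, ?_⟩
    · have := (Nat.le_div_iff_mul_le hp0).1 hc
      nlinarith
    · nlinarith
  · refine ⟨p, m / (6 * p), hp, by omega, by omega, ?_, ?_⟩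
    · have := Nat.div_mul_le_self m (6 * p)
      nlinarith
    · have := Nat.lt_div_mul_add (a := m) hp0
      nlinarith

lemma final_bound (n : ℕ) (hn : 2000000 ≤ n) :
    (n : ℝ) ^ ((3 : ℝ) / 2) / 4 ≤ (achromaticArboricity (⊤ : SimpleGraph (Fin n)) : ℝ) := by
  obtain ⟨p, b, hp, hb, hp400, hlo, hhi⟩ := exists_params n hn
  have hhi' : (n : ℝ) ≤ p * (2 * p + 6 * b + 16) := by exact_mod_cast hhi
  have hp400' : (400 : ℝ) ≤ p := by exact_mod_cast hp400
  have hb' : (b : ℝ) ≤ p := by exact_mod_cast hb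
  have key : ∀ K : ℝ, 0 ≤ K → (2 * (p : ℝ) + 6 * b + 16) ^ 3 ≤ 16 * p * K ^ 2 →
      (n : ℝ) ^ ((3 : ℝ) / 2) / 4 ≤ p * p * K := by
    intro K hK h
    have h0 : ((n : ℝ) ^ ((3 : ℝ) / 2)) ^ 2 = (n : ℝ) ^ 3 := by
      rw [← Real.rpow_natCast, ← Real.rpow_mul (Nat.cast_nonneg n)]
      norm_num
    have h1 : (n : ℝ) ^ 3 ≤ (4 * (p * p * K)) ^ 2 := by
      calc (n : ℝ) ^ 3 ≤ (p * (2 * p + 6 * b + 16)) ^ 3 := by gcongr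
        _ = p ^ 3 * (2 * (p : ℝ) + 6 * b + 16) ^ 3 := by ring
        _ ≤ p ^ 3 * (16 * p * K ^ 2) := by gcongr
        _ = _ := by ring
    rw [← h0] at h1
    have := (sq_le_sq₀ (by positivity) (by positivity)).1 h1
    linarith
  by_cases hA : 2 * b ≤ p
  · have h := achromatic_ge n p b hp hb true hlo
    have h' : ((p * p * (b * 5 + (p - b) * 1) : ℕ) : ℝ) ≤
      (achromaticArboricity (⊤ : SimpleGraph (Fin n)) : ℝ) := by exact_mod_cast h
    push_cast [Nat.cast_sub hb] at h'
    refine le_trans ?_ h'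
    have := key (b * 5 + (p - b) * 1) (by nlinarith [(Nat.cast_nonneg b : (0:ℝ) ≤ b)]) (by
      have := ineqA p b hp400' (Nat.cast_nonneg b) (by exact_mod_cast hA)
      refine this.trans (le_of_eq ?_)
      ring)
    exact this
  · have h := achromatic_ge n p b hp hb false hlo
    have h' : ((p * p * (b * 6 + (p - b) * 0) : ℕ) : ℝ) ≤
      (achromaticArboricity (⊤ : SimpleGraph (Fin n)) : ℝ) := by exact_mod_cast h
    push_cast [Nat.cast_sub hb] at h'
    refine le_trans ?_ h'
    have := key (b * 6 + (p - b) * 0) (by nlinarith [(Nat.cast_nonneg b : (0:ℝ) ≤ b)]) (by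
      have := ineqB p b hp400' (by exact_mod_cast (by omega : p ≤ 2 * b)) hb'
      refine this.trans (le_of_eq ?_)
      ring)
    exact this

end AchArb

/-- For every `ε > 0` there exists `C` such that for all `n ≥ C`,
the achromatic arboricity of `K_n` is at least `n^{3/2}/(4(1+ε)³) − n/(4(1+ε)²)`. -/
theorem achromaticArboricity_asymptotic_lower_bound :
    ∀ ε : ℝ, 0 < ε → ∃ C : ℕ, ∀ n : ℕ, C ≤ n →
      (n : ℝ) ^ ((3 : ℝ) / 2) / (4 * (1 + ε) ^ 3) - (n : ℝ) / (4 * (1 + ε) ^ 2) ≤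
        (achromaticArboricity (⊤ : SimpleGraph (Fin n)) : ℝ) := by
  intro ε hε
  refine ⟨2000000, fun n hn => ?_⟩
  refine le_trans ?_ (AchArb.final_bound n hn)
  have h1 : (0 : ℝ) ≤ (n : ℝ) / (4 * (1 + ε) ^ 2) := by positivity
  have h2 : (n : ℝ) ^ ((3 : ℝ) / 2) / (4 * (1 + ε) ^ 3) ≤ (n : ℝ) ^ ((3 : ℝ) / 2) / 4 := by
    apply div_le_div_of_nonneg_left (by positivity) (by norm_num)
    have : (1 : ℝ) ≤ (1 + ε) ^ 3 := one_le_pow₀ (by linarith)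
    linarith
  linarith
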